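/- Let n ≥ 1 be an integer. There exists a constant K > 0, depending only on n, with the following property. Let s ∈ (0,1), let f ∈ L²(Ω), let λ > I, let u be a weak solution of the fractional Laplacian problem and ũ a weak solution of the truncated nonlocal problem, both with the same data f. Assume C₁ > 0 is such that ‖v‖_{L²(Ω)} ≤ (1/C₁)·|||v||| for every test function v. Then |||u − ũ||| ≤ (K/(C₁·s·(λ−I)^{2s}))·‖u‖_{L²(Ω)}. -/

import Mathlib

open MeasureTheory Real Set

noncomputable section

abbrev Eucl (n : ℕ) := EuclideanSpace ℝ (Fin n)

/-- The normalizing constant `c_{n,s}` of the fractional Laplacian. -/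
def cns (n : ℕ) (s : ℝ) : ℝ :=
  s * (2 : ℝ) ^ (2 * s) * Real.Gamma ((n + 2) / 2) /
    (Real.Gamma (1 / 2) * Real.Gamma (1 - s))

/-- The interaction domain `Ω_I = {y ∈ ℝⁿ∖Ω : |y−x| < λ for some x ∈ Ω}`. -/
def interDom {n : ℕ} (Ω : Set (Eucl n)) (lam : ℝ) : Set (Eucl n) :=
  {y | y ∉ Ω ∧ ∃ x ∈ Ω, ‖y - x‖ < lam}

/-- The bilinear form `B_S(u,v) = ∬_S (u(y)−u(x))(v(y)−v(x))/|y−x|^{n+2s} dy dx`. -/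
def Bform {n : ℕ} (s : ℝ) (S : Set (Eucl n × Eucl n)) (u v : Eucl n → ℝ) : ℝ :=
  ∫ p in S, (u p.2 - u p.1) * (v p.2 - v p.1) / ‖p.2 - p.1‖ ^ ((n : ℝ) + 2 * s)

/-- `T = {(x,y) ∈ (Ω∪Ω_I)×(Ω∪Ω_I) : |y−x| < λ}`. -/
def Tset {n : ℕ} (Ω : Set (Eucl n)) (lam : ℝ) : Set (Eucl n × Eucl n) :=
  {p | p.1 ∈ Ω ∪ interDom Ω lam ∧ p.2 ∈ Ω ∪ interDom Ω lam ∧ ‖p.2 - p.1‖ < lam}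

/-- The energy seminorm `|||v||| = ((c_{n,s}/4)·B_T(v,v))^{1/2}`. -/
def energyNorm {n : ℕ} (s : ℝ) (Ω : Set (Eucl n)) (lam : ℝ) (v : Eucl n → ℝ) : ℝ :=
  Real.sqrt (cns n s / 4 * Bform s (Tset Ω lam) v v)

/-- The `H^s(D)` norm `(∫_D v² + B_{D×D}(v,v))^{1/2}`. -/
def HsNorm {n : ℕ} (s : ℝ) (D : Set (Eucl n)) (v : Eucl n → ℝ) : ℝ :=
  Real.sqrt ((∫ x in D, v x ^ 2) + Bform s (D ×ˢ D) v v)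

/-- The `L²(Ω)` norm. -/
def L2NormOn {n : ℕ} (Ω : Set (Eucl n)) (v : Eucl n → ℝ) : ℝ :=
  Real.sqrt (∫ x in Ω, v x ^ 2)

/-- The integrand of `B_S(u,v)`. -/
def gagIntegrand {n : ℕ} (s : ℝ) (u v : Eucl n → ℝ) : Eucl n × Eucl n → ℝ :=
  fun p => (u p.2 - u p.1) * (v p.2 - v p.1) / ‖p.2 - p.1‖ ^ ((n : ℝ) + 2 * s)

/-- A test function: measurable, square-integrable, vanishing a.e. off `Ω`,
with finite Gagliardo energy. -/
def IsTestFun {n : ℕ} (s : ℝ) (Ω : Set (Eucl n)) (v : Eucl n → ℝ) : Prop :=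
  Measurable v ∧ Integrable (fun x => v x ^ 2) ∧ (∀ᵐ x ∂volume, x ∉ Ω → v x = 0) ∧
    Integrable (fun p : Eucl n × Eucl n =>
      (v p.2 - v p.1) ^ 2 / ‖p.2 - p.1‖ ^ ((n : ℝ) + 2 * s))

/-- Weak solution of the fractional Laplacian problem with data `f`. -/
def IsFracSol {n : ℕ} (s : ℝ) (Ω : Set (Eucl n)) (f u : Eucl n → ℝ) : Prop :=
  IsTestFun s Ω u ∧ ∀ v, IsTestFun s Ω v →
    Integrable (gagIntegrand s u v) ∧
    cns n s / 2 * Bform s Set.univ u v = ∫ x in Ω, f x * v x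

/-- Weak solution of the truncated nonlocal problem with data `f`. -/
def IsTruncSol {n : ℕ} (s : ℝ) (Ω : Set (Eucl n)) (lam : ℝ) (f u : Eucl n → ℝ) : Prop :=
  IsTestFun s Ω u ∧ ∀ v, IsTestFun s Ω v →
    IntegrableOn (gagIntegrand s u v) (Tset Ω lam) ∧
    cns n s / 2 * Bform s (Tset Ω lam) u v = ∫ x in Ω, f x * v x

lemma cns_pos (n : ℕ) {s : ℝ} (hs : s ∈ Set.Ioo (0 : ℝ) 1) : 0 < cns n s := by
  obtain ⟨h0, h1⟩ := hs
  unfold cns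
  have := Real.Gamma_pos_of_pos (show (0:ℝ) < ((n:ℝ) + 2) / 2 by positivity)
  have := Real.Gamma_pos_of_pos (show (0:ℝ) < 1 / 2 by positivity)
  have := Real.Gamma_pos_of_pos (show (0:ℝ) < 1 - s by linarith)
  positivity

lemma cns_le (n : ℕ) {s : ℝ} (hs : s ∈ Set.Ioo (0 : ℝ) 1) :
    cns n s ≤ 4 * Real.Gamma (((n : ℝ) + 2) / 2) / Real.Gamma (1 / 2) := by
  obtain ⟨h0, h1⟩ := hs
  unfold cns
  have hG := Real.Gamma_pos_of_pos (show (0:ℝ) < ((n:ℝ) + 2) / 2 by positivity)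
  have hH := Real.Gamma_pos_of_pos (show (0:ℝ) < 1 / 2 by positivity)
  have h2 : 1 ≤ Real.Gamma (1 - s) := by
    have := Real.Gamma_strictAntiOn_Ioc.antitoneOn
      (show (1 - s) ∈ Set.Ioc (0:ℝ) 1 from ⟨by linarith, by linarith⟩)
      (show (1:ℝ) ∈ Set.Ioc (0:ℝ) 1 from ⟨by norm_num, le_rfl⟩) (by linarith)
    rwa [Real.Gamma_one] at this
  have h3 : (2:ℝ) ^ (2 * s) ≤ 4 := by
    calc (2:ℝ) ^ (2 * s) ≤ (2:ℝ) ^ (2:ℝ) :=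
          Real.rpow_le_rpow_of_exponent_le (by norm_num) (by linarith)
      _ = 4 := by norm_num
  have h4 : s * (2:ℝ) ^ (2 * s) ≤ 4 := by
    have : (0:ℝ) < (2:ℝ) ^ (2 * s) := by positivity
    nlinarith
  apply div_le_div₀ (by positivity) _ hH
  · nlinarith
  · gcongr

/-- truncated kernel -/
def kerT (n : ℕ) (s lam : ℝ) (z : Eucl n) : ℝ :=
  (Set.Ici lam).indicator (fun r : ℝ => 1 / r ^ ((n : ℝ) + 2 * s)) ‖z‖

lemma kerT_aux (n : ℕ) (hn : 1 ≤ n) {s lam : ℝ} (hl : 0 < lam) :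
    (fun y : ℝ => y ^ (Module.finrank ℝ (Eucl n) - 1) •
      (Set.Ici lam).indicator (fun r : ℝ => 1 / r ^ ((n : ℝ) + 2 * s)) y) =
    (Set.Ici lam).indicator (fun y : ℝ => y ^ (-1 - 2 * s)) := by
  ext y
  by_cases hy : y ∈ Set.Ici lam
  · have hy0 : 0 < y := lt_of_lt_of_le hl hy
    simp only [Set.indicator_of_mem hy, finrank_euclideanSpace, Fintype.card_fin, smul_eq_mul]
    rw [← Real.rpow_natCast, one_div, ← Real.rpow_neg hy0.le, ← Real.rpow_add hy0]
    congr 1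
    push_cast [Nat.cast_sub hn]
    ring
  · simp [Set.indicator_of_notMem hy]

lemma kerT_integrable (n : ℕ) (hn : 1 ≤ n) {s lam : ℝ} (hs : 0 < s) (hl : 0 < lam) :
    Integrable (kerT n s lam) := by
  have : Nonempty (Fin n) := ⟨⟨0, hn⟩⟩
  unfold kerT
  rw [integrable_fun_norm_addHaar (E := Eucl n) (μ := volume), kerT_aux n hn hl]
  apply Integrable.integrableOn
  rw [integrable_indicator_iff measurableSet_Ici, integrableOn_Ici_iff_integrableOn_Ioi]
  exact integrableOn_Ioi_rpow_of_lt (by linarith) hl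

lemma kerT_integral (n : ℕ) (hn : 1 ≤ n) {s lam : ℝ} (hs : 0 < s) (hl : 0 < lam) :
    ∫ z, kerT n s lam z =
      n * (volume : Measure (Eucl n)).real (Metric.ball 0 1) / (2 * s * lam ^ (2 * s)) := by
  have : Nonempty (Fin n) := ⟨⟨0, hn⟩⟩
  unfold kerT
  rw [integral_fun_norm_addHaar (E := Eucl n) (μ := volume), kerT_aux n hn hl,
    setIntegral_indicator measurableSet_Ici,
    show Set.Ioi (0:ℝ) ∩ Set.Ici lam = Set.Ici lam from
      Set.inter_eq_right.2 (fun x hx => lt_of_lt_of_le hl hx),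
    integral_Ici_eq_integral_Ioi, integral_Ioi_rpow_of_lt (by linarith) hl,
    show -1 - 2 * s + 1 = -(2 * s) by ring, Real.rpow_neg hl.le]
  simp only [finrank_euclideanSpace, Fintype.card_fin, smul_eq_mul, nsmul_eq_mul]
  have : 0 < lam ^ (2 * s) := by positivity
  field_simp

lemma kerT_nonneg (n : ℕ) (s lam : ℝ) (hl : 0 < lam) (z : Eucl n) : 0 ≤ kerT n s lam z := by
  unfold kerT
  apply Set.indicator_nonneg
  intro r hr
  have : 0 < r := lt_of_lt_of_le hl hr
  positivity

lemma kerT_neg (n : ℕ) (s lam : ℝ) (a b : Eucl n) :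
    kerT n s lam (a - b) = kerT n s lam (b - a) := by
  unfold kerT; rw [norm_sub_rev]

lemma conv_int (n : ℕ) {g k : Eucl n → ℝ} (hg : Integrable g) (hk : Integrable k) :
    Integrable (fun p : Eucl n × Eucl n => g p.2 * k (p.1 - p.2)) ∧
    ∫ p : Eucl n × Eucl n, g p.2 * k (p.1 - p.2) = (∫ x, g x) * ∫ x, k x := by
  have h1 : Integrable (fun p : Eucl n × Eucl n => g p.2 * k (p.1 - p.2)) := by
    have := hg.convolution_integrand (ContinuousLinearMap.mul ℝ ℝ) hk
    exact this
  refine ⟨h1, ?_⟩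
  have h2 := integral_convolution (L := ContinuousLinearMap.mul ℝ ℝ) hg hk
  simp only [convolution_def, ContinuousLinearMap.mul_apply'] at h2
  rw [← h2]
  exact integral_prod _ h1

lemma conv_int' (n : ℕ) {g k : Eucl n → ℝ} (hg : Integrable g) (hk : Integrable k) :
    Integrable (fun p : Eucl n × Eucl n => g p.1 * k (p.2 - p.1)) ∧
    ∫ p : Eucl n × Eucl n, g p.1 * k (p.2 - p.1) = (∫ x, g x) * ∫ x, k x := by
  obtain ⟨h1, h2⟩ := conv_int n hg hk
  refine ⟨h1.swap, ?_⟩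
  rw [← h2]
  exact integral_prod_swap (μ := (volume : Measure (Eucl n))) (ν := (volume : Measure (Eucl n)))
    (fun p : Eucl n × Eucl n => g p.2 * k (p.1 - p.2))

lemma union_interDom {n : ℕ} (Ω : Set (Eucl n)) {lam : ℝ} (hl : 0 < lam) :
    Ω ∪ interDom Ω lam = Metric.thickening lam Ω := by
  ext y
  simp only [Set.mem_union, interDom, Set.mem_ofPred_eq, Metric.mem_thickening_iff, dist_eq_norm]
  constructor
  · rintro (h | h)
    · exact ⟨y, h, by simpa using hl⟩
    · exact h.2
  · intro h
    by_cases hy : y ∈ Ω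
    · exact Or.inl hy
    · exact Or.inr ⟨hy, h⟩

lemma Tset_meas {n : ℕ} (Ω : Set (Eucl n)) {lam : ℝ} (hl : 0 < lam) :
    MeasurableSet (Tset Ω lam) := by
  unfold Tset
  rw [union_interDom Ω hl]
  have h := (Metric.isOpen_thickening (δ := lam) (E := Ω))
  have : IsOpen {p : Eucl n × Eucl n | ‖p.2 - p.1‖ < lam} :=
    isOpen_lt (by fun_prop) continuous_const
  exact ((h.preimage continuous_fst).inter ((h.preimage continuous_snd).inter this)).measurableSet

lemma IsTestFun.sub {n : ℕ} {s : ℝ} {Ω : Set (Eucl n)} {u v : Eucl n → ℝ}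
    (hu : IsTestFun s Ω u) (hv : IsTestFun s Ω v) : IsTestFun s Ω (u - v) := by
  obtain ⟨u1, u2, u3, u4⟩ := hu
  obtain ⟨v1, v2, v3, v4⟩ := hv
  refine ⟨u1.sub v1, ?_, ?_, ?_⟩
  · refine Integrable.mono' ((u2.const_mul 2).add (v2.const_mul 2))
      ((u1.sub v1).pow_const 2).aestronglyMeasurable (Filter.Eventually.of_forall fun x => ?_)
    simp only [Pi.add_apply, Pi.sub_apply, Real.norm_eq_abs, abs_pow, sq_abs]
    nlinarith [sq_nonneg (u x + v x)]
  · filter_upwards [u3, v3] with x h1 h2 hx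
    simp [h1 hx, h2 hx]
  · refine Integrable.mono' ((u4.const_mul 2).add (v4.const_mul 2)) ?_
      (Filter.Eventually.of_forall fun p => ?_)
    · have h1 := u1.sub v1
      apply Measurable.aestronglyMeasurable
      apply Measurable.div
      · exact ((h1.comp measurable_snd).sub (h1.comp measurable_fst)).pow_const 2
      · fun_prop
    · have hk : 0 ≤ ‖p.2 - p.1‖ ^ ((n : ℝ) + 2 * s) := by positivity
      simp only [Pi.add_apply, Pi.sub_apply, Real.norm_eq_abs]
      rw [abs_of_nonneg (by positivity), ← mul_div_assoc, ← mul_div_assoc, ← add_div]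
      gcongr
      nlinarith [sq_nonneg ((u p.2 - u p.1) + (v p.2 - v p.1))]

lemma cs_aux {n : ℕ} {Ω : Set (Eucl n)} (hΩ : MeasurableSet Ω) {u w : Eucl n → ℝ}
    (mu : Measurable u) (mw : Measurable w)
    (hu : Integrable (fun x => u x ^ 2)) (hw : Integrable (fun x => w x ^ 2))
    (h0 : ∀ᵐ x ∂volume, x ∉ Ω → u x = 0) :
    Integrable (fun x => |u x * w x|) ∧
    ∫ x, |u x * w x| ≤ L2NormOn Ω u * L2NormOn Ω w := by
  have hu2 : MemLp u 2 := (memLp_two_iff_integrable_sq mu.aestronglyMeasurable).2 hu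
  have hw2 : MemLp w 2 := (memLp_two_iff_integrable_sq mw.aestronglyMeasurable).2 hw
  refine ⟨(hu2.integrable_mul hw2).abs, ?_⟩
  have e : ∫ x, |u x * w x| = ∫ x in Ω, |u x| * |w x| := by
    rw [← integral_indicator hΩ]
    apply integral_congr_ae
    filter_upwards [h0] with x hx
    by_cases h : x ∈ Ω
    · simp [h, abs_mul]
    · simp [h, hx h]
  rw [e]
  have := integral_mul_le_Lp_mul_Lq_of_nonneg (μ := volume.restrict Ω) (p := 2) (q := 2)
    (f := fun x => |u x|) (g := fun x => |w x|)
    Real.HolderConjugate.two_two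
    (Filter.Eventually.of_forall fun x => abs_nonneg _)
    (Filter.Eventually.of_forall fun x => abs_nonneg _)
    (by rw [ENNReal.ofReal_ofNat]; exact (hu2.restrict Ω).abs)
    (by rw [ENNReal.ofReal_ofNat]; exact (hw2.restrict Ω).abs)
  simpa [L2NormOn, Real.sqrt_eq_rpow] using this

lemma compl_bound {n : ℕ} (hn : 1 ≤ n) {s lam : ℝ} (hs : 0 < s) (hl : 0 < lam)
    {Ω : Set (Eucl n)} (hΩ : IsOpen Ω) (hb : Bornology.IsBounded Ω)
    (hd : Metric.diam Ω < lam) {u w : Eucl n → ℝ}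
    (hu : IsTestFun s Ω u) (hw : IsTestFun s Ω w) :
    |∫ p in (Tset Ω lam)ᶜ, gagIntegrand s u w p| ≤
      n * (volume : Measure (Eucl n)).real (Metric.ball 0 1) / (s * lam ^ (2 * s)) *
        (L2NormOn Ω u * L2NormOn Ω w) := by
  obtain ⟨u1, u2, u3, -⟩ := hu
  obtain ⟨w1, w2, w3, -⟩ := hw
  obtain ⟨hi, hcs⟩ := cs_aux hΩ.measurableSet u1 w1 u2 w2 u3
  have hk := kerT_integrable n hn hs hl
  obtain ⟨a1, a2⟩ := conv_int n hi hk
  obtain ⟨b1, b2⟩ := conv_int' n hi hk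
  set G : Eucl n × Eucl n → ℝ := fun p =>
    |u p.2 * w p.2| * kerT n s lam (p.1 - p.2) + |u p.1 * w p.1| * kerT n s lam (p.2 - p.1) with hG
  have hGi : Integrable G := a1.add b1
  have hG0 : ∀ p, 0 ≤ G p := fun p => by
    have := kerT_nonneg n s lam hl (p.1 - p.2)
    have := kerT_nonneg n s lam hl (p.2 - p.1)
    simp only [hG]; positivity
  have hGint : ∫ p, G p = 2 * ((∫ x, |u x * w x|) * ∫ z, kerT n s lam z) := by
    simp only [hG]
    rw [integral_add a1 b1, a2, b2]; ring
  have q1 : ∀ᵐ x ∂(volume : Measure (Eucl n)), x ∉ Ω → u x = 0 ∧ w x = 0 := by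
    filter_upwards [u3, w3] with x h1 h2 hx using ⟨h1 hx, h2 hx⟩
  have q2 : ∀ᵐ p ∂(volume : Measure (Eucl n × Eucl n)), p.1 ∉ Ω → u p.1 = 0 ∧ w p.1 = 0 :=
    Measure.quasiMeasurePreserving_fst.ae q1
  have q3 : ∀ᵐ p ∂(volume : Measure (Eucl n × Eucl n)), p.2 ∉ Ω → u p.2 = 0 ∧ w p.2 = 0 :=
    Measure.quasiMeasurePreserving_snd.ae q1
  have hT := Tset_meas Ω hl
  have key : ∀ᵐ p ∂(volume : Measure (Eucl n × Eucl n)), p ∈ (Tset Ω lam)ᶜ →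
      ‖gagIntegrand s u w p‖ ≤ G p := by
    filter_upwards [q2, q3] with p h1 h2 hp
    by_cases hA : p.1 ∈ Ω ∨ p.2 ∈ Ω
    · have hfar : lam ≤ ‖p.2 - p.1‖ := by
        by_contra hlt
        push Not at hlt
        apply hp
        have : p.1 ∈ Metric.thickening lam Ω ∧ p.2 ∈ Metric.thickening lam Ω := by
          simp only [Metric.mem_thickening_iff, dist_eq_norm]
          rcases hA with hA | hA
          · exact ⟨⟨p.1, hA, by simpa using hl⟩, ⟨p.1, hA, hlt⟩⟩
          · exact ⟨⟨p.2, hA, by rwa [norm_sub_rev]⟩, ⟨p.2, hA, by simpa using hl⟩⟩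
        rw [← union_interDom Ω hl] at this
        exact ⟨this.1, this.2, hlt⟩
      have hB : p.1 ∉ Ω ∨ p.2 ∉ Ω := by
        by_contra hc
        push Not at hc
        have := Metric.dist_le_diam_of_mem hb hc.2 hc.1
        rw [dist_eq_norm] at this
        linarith
      have e1 : kerT n s lam (p.2 - p.1) = 1 / ‖p.2 - p.1‖ ^ ((n : ℝ) + 2 * s) := by
        unfold kerT
        rw [Set.indicator_of_mem (show ‖p.2 - p.1‖ ∈ Set.Ici lam from hfar)]
      have hk0 : 0 ≤ ‖p.2 - p.1‖ ^ ((n : ℝ) + 2 * s) := by positivity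
      simp only [hG, gagIntegrand]
      rw [kerT_neg n s lam p.1 p.2, e1, ← add_mul, mul_one_div, norm_div, Real.norm_eq_abs,
        Real.norm_eq_abs, abs_of_nonneg hk0]
      gcongr
      rcases hB with hB | hB
      · obtain ⟨z1, z2⟩ := h1 hB
        simp [z1, z2]
      · obtain ⟨z1, z2⟩ := h2 hB
        simp [z1, z2]
    · push Not at hA
      obtain ⟨z1, z2⟩ := h1 hA.1
      obtain ⟨z3, z4⟩ := h2 hA.2
      have : gagIntegrand s u w p = 0 := by simp [gagIntegrand, z1, z3]
      rw [this, norm_zero]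
      exact hG0 p
  rw [← Real.norm_eq_abs]
  calc ‖∫ p in (Tset Ω lam)ᶜ, gagIntegrand s u w p‖ ≤ ∫ p in (Tset Ω lam)ᶜ, G p :=
        norm_integral_le_of_norm_le hGi.integrableOn
          ((ae_restrict_iff' hT.compl).2 key)
    _ ≤ ∫ p, G p := setIntegral_le_integral hGi (Filter.Eventually.of_forall hG0)
    _ = n * (volume : Measure (Eucl n)).real (Metric.ball 0 1) / (s * lam ^ (2 * s)) *
        (∫ x, |u x * w x|) := by
        rw [hGint, kerT_integral n hn hs hl]
        have : 0 < lam ^ (2 * s) := by positivity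
        field_simp
    _ ≤ _ := by gcongr

/-- For each dimension `n ≥ 1` there is a constant `K > 0`, depending
only on `n`, such that for any `s ∈ (0,1)`, `f ∈ L²(Ω)`, `λ > I = diam Ω`, weak solution `u`
of the fractional Laplacian problem, weak solution `ũ` of the truncated nonlocal problem,
and any `C₁ > 0` with `‖v‖_{L²(Ω)} ≤ (1/C₁)·|||v|||` for all test functions `v`, one has
`|||u − ũ||| ≤ (K/(C₁·s·(λ−I)^{2s}))·‖u‖_{L²(Ω)}`. -/
theorem stmt0 (n : ℕ) (hn : 1 ≤ n) :
    ∃ K > (0 : ℝ), ∀ (s : ℝ), s ∈ Set.Ioo (0 : ℝ) 1 →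
      ∀ (Ω : Set (Eucl n)), Ω.Nonempty → IsOpen Ω → Bornology.IsBounded Ω →
      ∀ (lam : ℝ), Metric.diam Ω < lam →
      ∀ (f : Eucl n → ℝ), Measurable f → IntegrableOn (fun x => f x ^ 2) Ω →
      ∀ (u ut : Eucl n → ℝ),
        IsFracSol s Ω f u → IsTruncSol s Ω lam f ut →
      ∀ (C₁ : ℝ), 0 < C₁ →
        (∀ v, IsTestFun s Ω v → L2NormOn Ω v ≤ (1 / C₁) * energyNorm s Ω lam v) →
        energyNorm s Ω lam (u - ut) ≤
          K / (C₁ * s * (lam - Metric.diam Ω) ^ (2 * s)) * L2NormOn Ω u := by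
  set V : ℝ := (volume : Measure (Eucl n)).real (Metric.ball 0 1) with hV
  have hV0 : 0 ≤ V := measureReal_nonneg
  set M : ℝ := 4 * Real.Gamma (((n : ℝ) + 2) / 2) / Real.Gamma (1 / 2) with hM
  have hM0 : 0 ≤ M := by
    have := Real.Gamma_pos_of_pos (show (0:ℝ) < ((n:ℝ) + 2) / 2 by positivity)
    have := Real.Gamma_pos_of_pos (show (0:ℝ) < 1 / 2 by positivity)
    positivity
  refine ⟨M / 4 * (n * V) + 1, by positivity, ?_⟩
  intro s hs Ω hne hΩ hb lam hlam f _ _ u ut hu hut C₁ hC hP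
  have hs0 := hs.1
  have hd0 : 0 ≤ Metric.diam Ω := Metric.diam_nonneg
  have hl : 0 < lam := by linarith
  have hδ : 0 < lam - Metric.diam Ω := by linarith
  set w := u - ut with hw
  have tw : IsTestFun s Ω w := hu.1.sub hut.1
  have hT := Tset_meas Ω hl
  obtain ⟨iu, eu⟩ := hu.2 w tw
  obtain ⟨it, et⟩ := hut.2 w tw
  have hc := cns_pos n hs
  have hcM := cns_le n hs
  have hBB : Bform s Set.univ u w = Bform s (Tset Ω lam) ut w := by
    have h : cns n s / 2 * Bform s Set.univ u w = cns n s / 2 * Bform s (Tset Ω lam) ut w := by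
      rw [eu, et]
    exact mul_left_cancel₀ (by positivity) h
  have hsub : Bform s (Tset Ω lam) w w = Bform s (Tset Ω lam) u w - Bform s (Tset Ω lam) ut w := by
    have := integral_sub (μ := volume.restrict (Tset Ω lam)) iu.integrableOn it
    unfold Bform
    simp only [gagIntegrand] at this
    rw [← this]
    congr 1
    ext p
    simp only [hw, Pi.sub_apply]
    ring
  have hsplit : Bform s Set.univ u w =
      Bform s (Tset Ω lam) u w + ∫ p in (Tset Ω lam)ᶜ, gagIntegrand s u w p := by
    have := integral_add_compl hT iu
    rw [Bform, setIntegral_univ]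
    exact this.symm
  have hbd := compl_bound hn hs0 hl hΩ hb hlam hu.1 tw
  have hE : Bform s (Tset Ω lam) w w ≤
      n * V / (s * lam ^ (2 * s)) * (L2NormOn Ω u * L2NormOn Ω w) := by
    have := neg_abs_le (∫ p in (Tset Ω lam)ᶜ, gagIntegrand s u w p)
    linarith
  have hLu : 0 ≤ L2NormOn Ω u := Real.sqrt_nonneg _
  have hLw : 0 ≤ L2NormOn Ω w := Real.sqrt_nonneg _
  have hW : 0 ≤ Bform s (Tset Ω lam) w w := by
    unfold Bform
    apply integral_nonneg
    intro p
    have := mul_self_nonneg (w p.2 - w p.1)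
    simp only [Pi.zero_apply]
    positivity
  set N := energyNorm s Ω lam w with hN
  have hN0 : 0 ≤ N := Real.sqrt_nonneg _
  have hNsq : N ^ 2 = cns n s / 4 * Bform s (Tset Ω lam) w w :=
    Real.sq_sqrt (by positivity)
  have hPw := hP w tw
  have hpow : (lam - Metric.diam Ω) ^ (2 * s) ≤ lam ^ (2 * s) :=
    Real.rpow_le_rpow hδ.le (by linarith) (by linarith)
  have hpow0 : 0 < (lam - Metric.diam Ω) ^ (2 * s) := by positivity
  set D := (lam - Metric.diam Ω) ^ (2 * s) with hD
  have hfin : N ^ 2 ≤ (M / 4 * (n * V) + 1) / (C₁ * s * D) * L2NormOn Ω u * N := by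
    calc N ^ 2 = cns n s / 4 * Bform s (Tset Ω lam) w w := hNsq
      _ ≤ M / 4 * (n * V / (s * D) * (L2NormOn Ω u * (1 / C₁ * N))) := by
          refine mul_le_mul (by linarith) (hE.trans ?_) hW (by positivity)
          gcongr
      _ = (M / 4 * (n * V)) / (C₁ * s * D) * L2NormOn Ω u * N := by
          field_simp
      _ ≤ _ := by
          gcongr
          linarith
  rcases hN0.eq_or_lt with h | h
  · rw [← h]
    positivity
  · rw [pow_two] at hfin
    exact le_of_mul_le_mul_right hfin h
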